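/- For every multi-level apportionment instance, every non-negative integer h, and every tie-breaking, the allocation of h seats produced by the multi-level Jefferson's method fulfills lower quota. Moreover, the method satisfies house monotonicity: when the total number of seats increases from h to h+1, every node receives at least as many seats as before. -/

import Mathlib

/-- A multi-level apportionment instance: a rooted tree on nodes `0, …, n`
(root `0`, encoded by a parent function with `parent i < i` for `i ≠ 0`),
together with entitlements `W`. -/
structure MLA where
  n : ℕ
  parent : Fin (n + 1) → Fin (n + 1)
  parent_lt : ∀ i : Fin (n + 1), i ≠ 0 → (parent i : ℕ) < (i : ℕ)
  W : Fin (n + 1) → ℝ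
  W_pos : ∀ i, 0 < W i
  W_le_one : ∀ i, W i ≤ 1
  W_root : W 0 = 1
  W_sum : ∀ i : Fin (n + 1),
    (Finset.univ.filter (fun c => c ≠ 0 ∧ parent c = i)).Nonempty →
    ∑ c ∈ Finset.univ.filter (fun c => c ≠ 0 ∧ parent c = i), W c = 1

namespace MLA

variable (T : MLA)

/-- The set of children of node `i`. -/
def children (i : Fin (T.n + 1)) : Finset (Fin (T.n + 1)) :=
  Finset.univ.filter (fun c => c ≠ 0 ∧ T.parent c = i)

/-- The ancestor set `A(i)`: `A(0) = {0}` and `A(i) = {parent i} ∪ A(parent i)`. -/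
def ancestors (i : Fin (T.n + 1)) : Finset (Fin (T.n + 1)) :=
  if h : i = 0 then {0} else insert (T.parent i) (ancestors (T.parent i))
termination_by (i : ℕ)
decreasing_by exact T.parent_lt i h

/-- The entitlement of node `i` relative to the root: `R i = ∏_{a ∈ A(i) ∪ {i}} W a`. -/
def R (i : Fin (T.n + 1)) : ℝ := ∏ a ∈ insert i (T.ancestors i), T.W a

/-- `V` is an allocation of `h` seats. -/
def IsAlloc (h : ℕ) (V : Fin (T.n + 1) → ℕ) : Prop :=
  V 0 = h ∧ ∀ i, (T.children i).Nonempty → V i = ∑ c ∈ T.children i, V c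

/-- `V` fulfills lower quota: `V i ≥ LQ i = max_{a ∈ A(i)} ⌊(R i / R a) · V a⌋`. -/
def FulfillsLowerQuota (V : Fin (T.n + 1) → ℕ) : Prop :=
  ∀ i, ∀ a ∈ T.ancestors i, ⌊T.R i / T.R a * (V a : ℝ)⌋ ≤ (V i : ℤ)

/-- `V` fulfills upper quota: `V i ≤ UQ i = min_{a ∈ A(i)} ⌈(R i / R a) · V a⌉`. -/
def FulfillsUpperQuota (V : Fin (T.n + 1) → ℕ) : Prop :=
  ∀ i, ∀ a ∈ T.ancestors i, (V i : ℤ) ≤ ⌈T.R i / T.R a * (V a : ℝ)⌉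


/-- `P` is the set of nodes receiving the new seat in one step of an iterative
method with selection criterion `crit` (to be minimized among children) and
eligibility constraint `elig`: `P` is a root-to-leaf path, each non-root node on
the path is an eligible child of its parent minimizing `crit` among all eligible
children, and the seat counts along `P` each increase by one. -/
def IsStepWith (crit : (Fin (T.n + 1) → ℕ) → Fin (T.n + 1) → ℝ)
    (elig : (Fin (T.n + 1) → ℕ) → Fin (T.n + 1) → Prop)
    (P : Finset (Fin (T.n + 1))) (Vh Vh1 : Fin (T.n + 1) → ℕ) : Prop :=
  (0 : Fin (T.n + 1)) ∈ P ∧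
  (∀ i ∈ P, i ≠ 0 → T.parent i ∈ P) ∧
  (∀ i ∈ P, (T.children i).Nonempty → ∃ c ∈ T.children i, c ∈ P) ∧
  (∀ c ∈ P, ∀ d ∈ P, c ≠ 0 → d ≠ 0 → T.parent c = T.parent d → c = d) ∧
  (∀ c ∈ P, c ≠ 0 → elig Vh c ∧
    ∀ d ∈ T.children (T.parent c), elig Vh d → crit Vh c ≤ crit Vh d) ∧
  (∀ i, Vh1 i = Vh i + if i ∈ P then 1 else 0)

/-- `V : ℕ → (nodes → ℕ)` is a run of the iterative method given by `crit` and
`elig` (with arbitrary tie-breaking): `V 0` is the all-zero allocation and each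
`V (h+1)` is obtained from `V h` by allocating one more seat along a path. -/
def IsRun (crit : (Fin (T.n + 1) → ℕ) → Fin (T.n + 1) → ℝ)
    (elig : (Fin (T.n + 1) → ℕ) → Fin (T.n + 1) → Prop)
    (V : ℕ → Fin (T.n + 1) → ℕ) : Prop :=
  (∀ i, V 0 i = 0) ∧ ∀ h, ∃ P, T.IsStepWith crit elig P (V h) (V (h + 1))

/-- Adams' criterion: a child `c` minimizing `V c / R c` receives the seat. -/
noncomputable def adamsCrit (V : Fin (T.n + 1) → ℕ) (c : Fin (T.n + 1)) : ℝ :=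
  (V c : ℝ) / T.R c

/-- Jefferson's criterion: a child `c` minimizing `(V c + 1) / R c` receives the seat. -/
noncomputable def jeffersonCrit (V : Fin (T.n + 1) → ℕ) (c : Fin (T.n + 1)) : ℝ :=
  ((V c : ℝ) + 1) / T.R c

/-- Trivial eligibility constraint: every child is eligible. -/
def trivElig (_ : Fin (T.n + 1) → ℕ) (_ : Fin (T.n + 1)) : Prop := True

/-- Eligibility constraint of the quota method: `V c / W c < V (parent c) + 1`. -/
def quotaElig (V : Fin (T.n + 1) → ℕ) (c : Fin (T.n + 1)) : Prop :=
  (V c : ℝ) / T.W c < (V (T.parent c) : ℝ) + 1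

/-- Eligibility constraint of the upper-compliant quota method:
`V c / R c < (V a + 1) / R a` for every ancestor `a` of `c`. -/
def ucElig (V : Fin (T.n + 1) → ℕ) (c : Fin (T.n + 1)) : Prop :=
  ∀ a ∈ T.ancestors c, (V c : ℝ) / T.R c < ((V a : ℝ) + 1) / T.R a

end MLA

/-!
Under Jefferson's method, siblings `c` and `d` always satisfy `V d / R d ≤ (V c + 1) / R c`: this
is the selection rule at the moment `d` receives a seat, and it survives all later steps because
seat counts never decrease. Summing it over the children of a node shows that `(V + 1) / R` does
not decrease from a node to its children. Hence `V a / R a < (V a + 1) / R a ≤ (V i + 1) / R i` for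
every ancestor `a` of `i`, so that `(R i / R a) * V a < V i + 1`, which is lower quota.
-/

namespace MLA

variable {T : MLA}

section Tree

lemma mem_children {i c : Fin (T.n + 1)} : c ∈ T.children i ↔ c ≠ 0 ∧ T.parent c = i := by
  simp [children]

lemma mem_children_parent {c : Fin (T.n + 1)} (hc : c ≠ 0) : c ∈ T.children (T.parent c) :=
  mem_children.2 ⟨hc, rfl⟩

lemma ancestors_zero : T.ancestors 0 = {0} := by
  rw [ancestors, dif_pos rfl]

lemma ancestors_of_ne_zero {i : Fin (T.n + 1)} (hi : i ≠ 0) :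
    T.ancestors i = insert (T.parent i) (T.ancestors (T.parent i)) := by
  rw [ancestors, dif_neg hi]

lemma apply_le_of_mem_ancestors {α : Type*} [Preorder α] {f : Fin (T.n + 1) → α}
    (hf : ∀ i ≠ 0, f (T.parent i) ≤ f i) {i a : Fin (T.n + 1)} (ha : a ∈ T.ancestors i) :
    f a ≤ f i := by
  induction i using ancestors.induct with
  | case1 =>
    rw [ancestors_zero, Finset.mem_singleton] at ha
    rw [ha]
  | case2 i hi ih =>
    rw [ancestors_of_ne_zero hi, Finset.mem_insert] at ha
    rcases ha with rfl | ha
    · exact hf i hi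
    · exact (ih ha).trans (hf i hi)

lemma le_of_mem_ancestors {i a : Fin (T.n + 1)} (ha : a ∈ T.ancestors i) : a ≤ i :=
  apply_le_of_mem_ancestors (f := id) (fun i hi => (T.parent_lt i hi).le) ha

end Tree

section Entitlement

lemma R_pos (i : Fin (T.n + 1)) : 0 < T.R i :=
  Finset.prod_pos fun a _ => T.W_pos a

lemma R_eq_W_mul_R_parent {c : Fin (T.n + 1)} (hc : c ≠ 0) :
    T.R c = T.W c * T.R (T.parent c) := by
  have hlt : T.parent c < c := T.parent_lt c hc
  have hnotMem : c ∉ insert (T.parent c) (T.ancestors (T.parent c)) := by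
    rw [Finset.mem_insert, not_or]
    exact ⟨hlt.ne', fun h => (le_of_mem_ancestors h).not_gt hlt⟩
  rw [R, R, ancestors_of_ne_zero hc, Finset.prod_insert hnotMem]

lemma sum_children_R {i : Fin (T.n + 1)} (hi : (T.children i).Nonempty) :
    ∑ c ∈ T.children i, T.R c = T.R i := by
  calc ∑ c ∈ T.children i, T.R c
      = ∑ c ∈ T.children i, T.W c * T.R i := Finset.sum_congr rfl fun c hc => by
        obtain ⟨hc0, rfl⟩ := mem_children.1 hc
        exact R_eq_W_mul_R_parent hc0
    _ = (∑ c ∈ T.children i, T.W c) * T.R i := (Finset.sum_mul ..).symm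
    _ = T.R i := by rw [show ∑ c ∈ T.children i, T.W c = 1 from T.W_sum i hi, one_mul]

end Entitlement

section Allocation

variable {h : ℕ} {V V' : Fin (T.n + 1) → ℕ}

lemma jeffersonCrit_mono {c : Fin (T.n + 1)} (hV : V c ≤ V' c) :
    T.jeffersonCrit V c ≤ T.jeffersonCrit V' c := by
  have := R_pos c
  unfold jeffersonCrit
  gcongr

lemma adamsCrit_lt_jeffersonCrit (V : Fin (T.n + 1) → ℕ) (c : Fin (T.n + 1)) :
    T.adamsCrit V c < T.jeffersonCrit V c :=
  div_lt_div_of_pos_right (lt_add_one _) (R_pos c)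

variable (T) in
/-- `V` is Jefferson-balanced if `V d / R d ≤ (V c + 1) / R c` for all siblings `c` and `d`: the
invariant maintained by Jefferson's method. The two sides happen to be the selection criteria of
Adams and Jefferson, in terms of which it is stated. -/
def IsJeffersonBalanced (V : Fin (T.n + 1) → ℕ) : Prop :=
  ∀ i, ∀ c ∈ T.children i, ∀ d ∈ T.children i, T.adamsCrit V d ≤ T.jeffersonCrit V c

lemma IsJeffersonBalanced.jeffersonCrit_parent_le (hbal : T.IsJeffersonBalanced V)
    (hV : T.IsAlloc h V) {c : Fin (T.n + 1)} (hc : c ≠ 0) :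
    T.jeffersonCrit V (T.parent c) ≤ T.jeffersonCrit V c := by
  set p := T.parent c
  set t := T.jeffersonCrit V c with ht
  have hcp : c ∈ T.children p := mem_children_parent hc
  have hseats : ∀ d ∈ T.children p, (V d : ℝ) + (if d = c then 1 else 0) ≤ t * T.R d := by
    intro d hd
    split_ifs with hdc
    · rw [hdc, ht, jeffersonCrit, div_mul_cancel₀ _ (R_pos c).ne']
    · rw [add_zero, ← div_le_iff₀ (R_pos d)]
      exact hbal p c hcp d hd
  rw [jeffersonCrit, div_le_iff₀ (R_pos p)]
  calc (V p : ℝ) + 1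
      = ∑ d ∈ T.children p, ((V d : ℝ) + (if d = c then 1 else 0)) := by
        rw [Finset.sum_add_distrib, Finset.sum_ite_eq', if_pos hcp, hV.2 p ⟨c, hcp⟩, Nat.cast_sum]
    _ ≤ ∑ d ∈ T.children p, t * T.R d := Finset.sum_le_sum hseats
    _ = t * T.R p := by rw [← Finset.mul_sum, sum_children_R ⟨c, hcp⟩]

lemma IsJeffersonBalanced.fulfillsLowerQuota (hbal : T.IsJeffersonBalanced V)
    (hV : T.IsAlloc h V) : T.FulfillsLowerQuota V := by
  intro i a ha
  have hcrit : T.adamsCrit V a < T.jeffersonCrit V i :=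
    (adamsCrit_lt_jeffersonCrit V a).trans_le
      (apply_le_of_mem_ancestors (fun _ hj => hbal.jeffersonCrit_parent_le hV hj) ha)
  have hquota : T.R i / T.R a * (V a : ℝ) < (V i : ℝ) + 1 :=
    calc T.R i / T.R a * (V a : ℝ) = T.adamsCrit V a * T.R i := by rw [adamsCrit]; ring
      _ < (V i : ℝ) + 1 := (lt_div_iff₀ (R_pos i)).1 hcrit
  rw [← Int.lt_add_one_iff, Int.floor_lt]
  exact_mod_cast hquota

end Allocation

section Step

variable {crit : (Fin (T.n + 1) → ℕ) → Fin (T.n + 1) → ℝ}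
  {elig : (Fin (T.n + 1) → ℕ) → Fin (T.n + 1) → Prop}
  {P : Finset (Fin (T.n + 1))} {h : ℕ} {V V' : Fin (T.n + 1) → ℕ}

lemma IsStepWith.le (hstep : T.IsStepWith crit elig P V V') : V ≤ V' := by
  obtain ⟨-, -, -, -, -, hV'⟩ := hstep
  intro i
  rw [hV']
  exact Nat.le_add_right _ _

lemma IsStepWith.sum_children_indicator (hstep : T.IsStepWith crit elig P V V')
    {i : Fin (T.n + 1)} (hi : (T.children i).Nonempty) :
    (∑ c ∈ T.children i, if c ∈ P then 1 else 0) = if i ∈ P then 1 else 0 := by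
  obtain ⟨-, hparent, hchild, hunique, -, -⟩ := hstep
  split_ifs with hiP
  · obtain ⟨c, hc, hcP⟩ := hchild i hiP hi
    rw [Finset.sum_eq_single_of_mem c hc, if_pos hcP]
    refine fun d hd hdc => if_neg fun hdP => hdc ?_
    rw [mem_children] at hc hd
    exact hunique d hdP c hcP hd.1 hc.1 (hd.2.trans hc.2.symm)
  · refine Finset.sum_eq_zero fun c hc => if_neg fun hcP => hiP ?_
    obtain ⟨hc0, rfl⟩ := mem_children.1 hc
    exact hparent c hcP hc0

lemma IsStepWith.isAlloc (hstep : T.IsStepWith crit elig P V V') (hV : T.IsAlloc h V) :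
    T.IsAlloc (h + 1) V' := by
  have hindicator := fun i => hstep.sum_children_indicator (i := i)
  obtain ⟨hroot, -, -, -, -, hV'⟩ := hstep
  refine ⟨by rw [hV', if_pos hroot, hV.1], fun i hi => ?_⟩
  simp only [hV', Finset.sum_add_distrib, hindicator i hi, hV.2 i hi]

lemma IsStepWith.isJeffersonBalanced
    (hstep : T.IsStepWith T.jeffersonCrit T.trivElig P V V') (hbal : T.IsJeffersonBalanced V) :
    T.IsJeffersonBalanced V' := by
  intro i c hc d hd
  refine le_trans ?_ (jeffersonCrit_mono (hstep.le c))
  obtain ⟨-, -, -, -, hmin, hV'⟩ := hstep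
  by_cases hdP : d ∈ P
  · obtain ⟨hd0, rfl⟩ := mem_children.1 hd
    calc T.adamsCrit V' d = T.jeffersonCrit V d := by
          rw [adamsCrit, jeffersonCrit, hV', if_pos hdP, Nat.cast_add_one]
      _ ≤ T.jeffersonCrit V c := (hmin d hdP hd0).2 c hc trivial
  · calc T.adamsCrit V' d = T.adamsCrit V d := by
          rw [adamsCrit, adamsCrit, hV', if_neg hdP, add_zero]
      _ ≤ T.jeffersonCrit V c := hbal i c hc d hd

end Step

section Run

variable {crit : (Fin (T.n + 1) → ℕ) → Fin (T.n + 1) → ℝ}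
  {elig : (Fin (T.n + 1) → ℕ) → Fin (T.n + 1) → Prop} {V : ℕ → Fin (T.n + 1) → ℕ}

lemma IsRun.monotone (hrun : T.IsRun crit elig V) : Monotone V :=
  monotone_nat_of_le_succ fun h => (hrun.2 h).elim fun _ hstep => hstep.le

lemma IsRun.isAlloc (hrun : T.IsRun crit elig V) (h : ℕ) : T.IsAlloc h (V h) := by
  induction h with
  | zero => exact ⟨hrun.1 0, fun i _ => by simp only [hrun.1, Finset.sum_const_zero]⟩
  | succ h ih =>
    obtain ⟨P, hstep⟩ := hrun.2 h
    exact hstep.isAlloc ih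

lemma IsRun.isJeffersonBalanced (hrun : T.IsRun T.jeffersonCrit T.trivElig V) (h : ℕ) :
    T.IsJeffersonBalanced (V h) := by
  induction h with
  | zero =>
    intro i c _ d _
    have := R_pos c
    rw [adamsCrit, jeffersonCrit, hrun.1, Nat.cast_zero, zero_div]
    positivity
  | succ h ih =>
    obtain ⟨P, hstep⟩ := hrun.2 h
    exact hstep.isJeffersonBalanced ih

end Run

end MLA

/-- Any run of the multi-level Jefferson's method fulfills
lower quota after every number of seats, and satisfies house monotonicity. -/
theorem jefferson_lower_quota_and_house_monotone (T : MLA) (V : ℕ → Fin (T.n + 1) → ℕ)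
    (hrun : T.IsRun T.jeffersonCrit T.trivElig V) :
    (∀ h : ℕ, T.FulfillsLowerQuota (V h)) ∧ (∀ h : ℕ, ∀ i, V h i ≤ V (h + 1) i) :=
  ⟨fun h => (hrun.isJeffersonBalanced h).fulfillsLowerQuota (hrun.isAlloc h),
    fun h => hrun.monotone h.le_succ⟩
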